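/- arXiv:2509.15000 — 4 statements merged into one kernel-verified Lean document; each statement's English description precedes it below -/
import Mathlib

section
/- Let G be an infinite, connected, locally finite simple graph with exactly one end and let T be a spanning tree of G. Then T has exactly one end if and only if every edge of T lies in only finitely many fundamental cycles, i.e., for every edge e of T the set of edges f of G not in T whose fundamental cycle with respect to T contains e is finite. -/
open SimpleGraph

theorem aux_end_infinite {V : Type*} (H : SimpleGraph V) {s} (hs : s ∈ H.end)
    (K : (Finset V)ᵒᵖ) : (ComponentCompl.supp (s K)).Infinite := by
  refine (ComponentCompl.infinite_iff_in_all_ranges (K := K.unop) (s K)).mpr (fun L h => ?_)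
  exact ⟨s (Opposite.op L), hs (CategoryTheory.opHomOfLE (x := K) (y := Opposite.op L) h)⟩

theorem aux_finite {V : Type*} (H : SimpleGraph V) (hc : H.Connected)
    (hlf : ∀ v : V, (H.neighborSet v).Finite) (K : Finset V) :
    Finite (H.ComponentCompl K) := by
  classical
  have : LocallyFinite H := fun v => (hlf v).fintype
  have : Fact H.Preconnected := ⟨hc.preconnected⟩
  infer_instance

theorem aux_nonempty {V : Type*} [Infinite V] (H : SimpleGraph V) (hc : H.Connected)
    (hlf : ∀ v : V, (H.neighborSet v).Finite) : H.end.Nonempty := by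
  classical
  have : ∀ K : (Finset V)ᵒᵖ, Finite (H.componentComplFunctor.obj K) :=
    fun K => aux_finite H hc hlf K.unop
  have : ∀ K : (Finset V)ᵒᵖ, Nonempty (H.componentComplFunctor.obj K) :=
    fun K => H.componentCompl_nonempty_of_infinite K.unop
  exact nonempty_sections_of_finite_inverse_system H.componentComplFunctor

theorem aux_exists_end {V : Type*} [Infinite V] (H : SimpleGraph V) (hc : H.Connected)
    (hlf : ∀ v : V, (H.neighborSet v).Finite) (K : Finset V) (C : H.ComponentCompl K)
    (hC : C.supp.Infinite) : ∃ s ∈ H.end, s (Opposite.op K) = C := by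
  classical
  have : ∀ K : (Finset V)ᵒᵖ, Finite (H.componentComplFunctor.obj K) :=
    fun K => aux_finite H hc hlf K.unop
  have : ∀ K : (Finset V)ᵒᵖ, Nonempty (H.componentComplFunctor.obj K) :=
    fun K => H.componentCompl_nonempty_of_infinite K.unop
  let F := H.componentComplFunctor
  have hML : F.IsMittagLeffler := F.isMittagLeffler_of_exists_finite_range
    (fun j => ⟨j, CategoryTheory.CategoryStruct.id j, Set.toFinite _⟩)
  have : ∀ j, Nonempty (F.toEventualRanges.obj j) := F.toEventualRanges_nonempty hML
  have : ∀ j, Finite (F.toEventualRanges.obj j) := fun j =>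
    Finite.of_injective (β := F.obj j) (fun x => x.1) Subtype.val_injective
  have hC' : C ∈ F.eventualRange (Opposite.op K) :=
    (H.infinite_iff_in_eventualRange (K := Opposite.op K) C).1 hC
  obtain ⟨t, ht⟩ := F.toEventualRanges.eval_section_surjective_of_surjective
    (F.surjective_toEventualRanges hML) (Opposite.op K) ⟨C, hC'⟩
  refine ⟨fun j => (t.1 j).1, fun {i j} f => ?_, congrArg Subtype.val ht⟩
  exact congrArg Subtype.val (t.2 f)

/-- A component meeting an infinite set in an infinite set. -/
theorem aux_comp {V : Type*} (H : SimpleGraph V) (K : Finset V) [Finite (H.ComponentCompl K)]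
    (A : Set V) (hA : A.Infinite) :
    ∃ C : H.ComponentCompl K, C.supp.Infinite ∧ ∃ a ∈ A, a ∈ C.supp := by
  by_contra hcon
  push Not at hcon
  apply hA
  have h1 : A ⊆ (K : Set V) ∪ ⋃ C : {C : H.ComponentCompl K // C.supp.Finite}, C.1.supp := by
    intro a ha
    by_cases hK : a ∈ (K : Set V)
    · exact Or.inl hK
    · right
      have hm : a ∈ (H.componentComplMk hK).supp := H.componentComplMk_mem hK
      refine Set.mem_iUnion.2 ⟨⟨H.componentComplMk hK, ?_⟩, hm⟩
      by_contra hinf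
      exact hcon _ hinf a ha hm
  exact (K.finite_toSet.union (Set.finite_iUnion fun C => C.2)).subset h1

theorem aux_cut {V : Type*} [Infinite V] (H : SimpleGraph V) (hc : H.Connected)
    (hlf : ∀ v : V, (H.neighborSet v).Finite) :
    H.end.Subsingleton ↔ ∀ A : Set V, {v | v ∈ A ∧ ∃ w, w ∉ A ∧ H.Adj v w}.Finite →
      A.Finite ∨ Aᶜ.Finite := by
  classical
  constructor
  · intro hs A hA
    by_contra hcon
    push Not at hcon
    obtain ⟨h1, h2⟩ := hcon
    set K := hA.toFinset with hK
    have := aux_finite H hc hlf K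
    have h1' : (A \ K).Infinite := Set.Infinite.sdiff h1 K.finite_toSet
    obtain ⟨C, hC, a, ha, haC⟩ := aux_comp H K _ h1'
    obtain ⟨D, hD, b, hb, hbD⟩ := aux_comp H K _ h2
    obtain ⟨s, hs1, hs2⟩ := aux_exists_end H hc hlf K C hC
    obtain ⟨t, ht1, ht2⟩ := aux_exists_end H hc hlf K D hD
    have hCD : C = D := by rw [← hs2, ← ht2, hs hs1 ht1]
    subst hCD
    obtain ⟨haK, hae⟩ := haC
    obtain ⟨hbK, hbe⟩ := hbD
    obtain ⟨p⟩ := ConnectedComponent.eq.1 (hae.trans hbe.symm)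
    obtain ⟨d, -, hd1, hd2⟩ := p.exists_boundary_dart (Subtype.val ⁻¹' A) ha.1 hb
    have : d.fst.1 ∈ K := hA.mem_toFinset.2 ⟨hd1, d.snd.1, hd2, d.adj⟩
    exact d.fst.2 this
  · intro h s hs t ht
    funext K
    have hsi := aux_end_infinite H hs K
    have hti := aux_end_infinite H ht K
    obtain ⟨K⟩ := K
    generalize s (Opposite.op K) = C at hsi
    generalize t (Opposite.op K) = D at hti
    change H.ComponentCompl K at C D
    have hb : {v | v ∈ C.supp ∧ ∃ w, w ∉ C.supp ∧ H.Adj v w}.Finite := by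
      refine (Set.Finite.biUnion K.finite_toSet (fun k _ => hlf k)).subset ?_
      rintro v ⟨hv, w, hw, hvw⟩
      by_cases hwK : w ∈ (K : Set V)
      · exact Set.mem_biUnion hwK hvw.symm
      · exact absurd (ComponentCompl.mem_of_adj v w hv hwK hvw) hw
    rcases h _ hb with h | h
    · exact absurd h hsi
    · by_contra hne
      have hdis := ComponentCompl.pairwise_disjoint hne
      refine hti (h.subset ?_)
      intro x hx hx'
      exact Set.disjoint_iff.1 hdis ⟨hx', hx⟩

/-- For a spanning tree `T` of an infinite, connected, locally finite,
one-ended graph `G`, the tree `T` has exactly one end iff every edge of `T` lies in only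
finitely many fundamental cycles (with respect to `T`). An edge `e` of `T` lies in the
fundamental cycle of a non-tree edge `f = s(x, y)` exactly when `e` is an edge of the
unique path in `T` from `x` to `y`. -/
theorem stmt2 {V : Type*} [Infinite V] (G : SimpleGraph V)
    (hconn : G.Connected) (hlf : ∀ v : V, (G.neighborSet v).Finite)
    (hend : G.end.Nonempty ∧ G.end.Subsingleton)
    (T : SimpleGraph V) (hTG : T ≤ G) (hTconn : T.Connected) (hTacyc : T.IsAcyclic) :
    (T.end.Nonempty ∧ T.end.Subsingleton) ↔
      (∀ e ∈ T.edgeSet,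
        {f : Sym2 V | f ∈ G.edgeSet ∧ f ∉ T.edgeSet ∧
          ∃ x y : V, f = s(x, y) ∧
            ∃ p : T.Walk x y, p.IsPath ∧ e ∈ p.edges}.Finite) := by
  classical
  have hTlf : ∀ v : V, (T.neighborSet v).Finite := fun v =>
    (hlf v).subset (fun w hw => hTG hw)
  rw [and_iff_right (aux_nonempty T hTconn hTlf), aux_cut T hTconn hTlf]
  have hGcut := (aux_cut G hconn hlf).1 hend.2
  constructor
  · intro h e he
    induction e with | h u v
    set T' := T.deleteEdges {s(u, v)} with hT'
    have hadj : ∀ a b, T.Adj a b → s(a, b) ≠ s(u, v) → T'.Adj a b := by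
      intro a b hab hne
      rw [hT', deleteEdges_adj]
      exact ⟨hab, hne⟩
    let A : Set V := {z | T'.Reachable u z}
    have hbd : {x | x ∈ A ∧ ∃ w, w ∉ A ∧ T.Adj x w}.Finite := by
      refine (Set.toFinite {u, v}).subset ?_
      rintro x ⟨hx, w, hw, hxw⟩
      by_cases hne : s(x, w) = s(u, v)
      · have : x ∈ s(u, v) := hne ▸ Sym2.mem_mk_left x w
        simpa using this
      · exact absurd (hx.trans (hadj _ _ hxw hne).reachable) hw
    have hall : ∀ z, T'.Reachable u z ∨ T'.Reachable v z := by
      intro z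
      by_contra hz
      obtain ⟨p⟩ := hTconn.preconnected u z
      obtain ⟨d, -, hd1, hd2⟩ := p.exists_boundary_dart
        {z | T'.Reachable u z ∨ T'.Reachable v z} (Or.inl (Reachable.refl _)) hz
      apply hd2
      by_cases hne : s(d.fst, d.snd) = s(u, v)
      · have : d.snd ∈ s(u, v) := hne ▸ Sym2.mem_mk_right _ _
        rcases Sym2.mem_iff.1 this with h | h
        · left; rw [h]
        · right; rw [h]
      · have := (hadj _ _ d.adj hne).reachable
        exact hd1.imp (fun h => h.trans this) (fun h => h.trans this)
    have hsep : ∀ x y (p : T.Walk x y), p.IsPath → s(u, v) ∈ p.edges → ¬ T'.Reachable x y := by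
      intro x y p hp hmem hr
      obtain ⟨q, hq⟩ := hr.exists_isPath
      have hle : T' ≤ T := deleteEdges_le _
      have heq : q.mapLe hle = p := congrArg Subtype.val
        (hTacyc.path_unique ⟨q.mapLe hle, hq.mapLe hle⟩ ⟨p, hp⟩)
      rw [← heq, Walk.edges_mapLe_eq_edges] at hmem
      have := q.edges_subset_edgeSet hmem
      rw [hT', mem_edgeSet, deleteEdges_adj] at this
      exact this.2 rfl
    have key : ∃ S : Set V, S.Finite ∧ ∀ x y, ¬ T'.Reachable x y → x ∈ S ∨ y ∈ S := by
      rcases h A hbd with hf | hf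
      · refine ⟨A, hf, fun x y hxy => ?_⟩
        by_contra hcon
        push Not at hcon
        exact hxy (((hall x).resolve_left hcon.1).symm.trans ((hall y).resolve_left hcon.2))
      · refine ⟨Aᶜ, hf, fun x y hxy => ?_⟩
        by_contra hcon
        simp only [Set.mem_compl_iff, not_or, not_not] at hcon
        exact hxy (Reachable.trans (Reachable.symm hcon.1) hcon.2)
    obtain ⟨S, hS, hcov⟩ := key
    refine (Set.Finite.biUnion hS (fun x _ => (hlf x).image (fun y => s(x, y)))).subset ?_
    rintro f ⟨hfG, -, x, y, rfl, p, hp, hmem⟩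
    have hfG' : G.Adj x y := hfG
    rcases hcov x y (hsep x y p hp hmem) with hx | hy
    · exact Set.mem_biUnion hx ⟨y, hfG', rfl⟩
    · exact Set.mem_biUnion hy ⟨x, hfG'.symm, Sym2.eq_swap⟩
  · intro h A hA
    apply hGcut
    have hE : (⋃ a ∈ {v | v ∈ A ∧ ∃ w, w ∉ A ∧ T.Adj v w},
        (fun b => s(a, b)) '' T.neighborSet a).Finite :=
      Set.Finite.biUnion hA (fun x _ => (hTlf x).image _)
    have hEsub : ∀ e ∈ (⋃ a ∈ {v | v ∈ A ∧ ∃ w, w ∉ A ∧ T.Adj v w},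
        (fun b => s(a, b)) '' T.neighborSet a), e ∈ T.edgeSet := by
      intro e he
      simp only [Set.mem_iUnion] at he
      obtain ⟨a, -, b, hb, rfl⟩ := he
      exact hb
    have hF := Set.Finite.biUnion hE (fun e he => h e (hEsub e he))
    have hV := Set.Finite.biUnion hF (fun f _ => (Sym2.toFinset f).finite_toSet)
    refine (hA.union hV).subset ?_
    rintro v ⟨hv, w, hw, hvw⟩
    by_cases hT : T.Adj v w
    · exact Or.inl ⟨hv, w, hw, hT⟩
    · right
      obtain ⟨p, hp⟩ := (hTconn.preconnected v w).exists_isPath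
      obtain ⟨d, hd, hd1, hd2⟩ := p.exists_boundary_dart A hv hw
      refine Set.mem_biUnion (x := s(v, w)) ?_ (by simp)
      refine Set.mem_biUnion (x := s(d.fst, d.snd)) ?_ ⟨hvw, hT, v, w, rfl, p, hp, ?_⟩
      · exact Set.mem_biUnion (x := d.fst) ⟨hd1, d.snd, hd2, d.adj⟩ ⟨d.snd, d.adj, rfl⟩
      · exact List.mem_map.2 ⟨d, hd, rfl⟩
end

section
/- Let G be an infinite, connected, locally finite simple graph with exactly one end. Let 𝓑 be a set of cycles of G that generates the cycle space of G: for every cycle C of G, the indicator function of the edge set of C (an element of the 𝔽₂-vector space of finitely supported functions from edges to ZMod 2) lies in the 𝔽₂-linear span of the indicator functions of the edge sets of the cycles in 𝓑. Let F be a finite set of vertices such that the induced subgraph G[F] is connected. Define ker(F) as the set of edges e of G[F] such that every cycle in 𝓑 containing e has all of its edges in G[F], and let H be the graph on F whose edges are the edges of G[F] not in ker(F). Call a vertex v ∈ F exterior if the connected component of v in H contains a vertex w that is the initial vertex of a ray in G whose only vertex in F is w. Then any two exterior vertices are joined by a path in H. -/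
open SimpleGraph

/-- The indicator function of the (finite) edge set of a walk, as an element of the
`𝔽₂`-vector space of finitely supported functions from edges to `ZMod 2`. -/
noncomputable def walkIndicator {V : Type*} {G : SimpleGraph V} {x : V} (w : G.Walk x x) :
    Sym2 V →₀ ZMod 2 :=
  letI := Classical.decEq (Sym2 V)
  ∑ e ∈ w.edges.toFinset, Finsupp.single e 1

/-- The edges of the induced subgraph `G[F]`: edges of `G` with both endpoints in `F`. -/
def edgesWithin {V : Type*} (G : SimpleGraph V) (F : Set V) : Set (Sym2 V) :=
  {e | e ∈ G.edgeSet ∧ ∀ v ∈ e, v ∈ F}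

/-- `ker F` with respect to a family `𝓑` of cycles: the edges `e` of `G[F]` such that every
cycle of `𝓑` containing `e` has all of its edges in `G[F]`. -/
def kerEdges {V : Type*} (G : SimpleGraph V) (𝓑 : Set ((x : V) × G.Walk x x)) (F : Set V) :
    Set (Sym2 V) :=
  {e ∈ edgesWithin G F | ∀ b ∈ 𝓑, e ∈ b.2.edges → ∀ f ∈ b.2.edges, f ∈ edgesWithin G F}

/-- A ray in `G` starting at `v`. -/
def IsRay {V : Type*} (G : SimpleGraph V) (v : V) (r : ℕ → V) : Prop :=
  Function.Injective r ∧ r 0 = v ∧ ∀ n : ℕ, G.Adj (r n) (r (n + 1))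

lemma aux_path {V : Type*} {G : SimpleGraph V} {s : Set V} {x y : s}
    (h : (G.induce s).Reachable x y) :
    ∃ p : G.Walk x y, p.IsPath ∧ ∀ z ∈ p.support, z ∈ s := by
  obtain ⟨p, hp⟩ := h.exists_isPath
  refine ⟨p.map (SimpleGraph.Embedding.induce s).toHom, ?_, ?_⟩
  · exact SimpleGraph.Walk.IsPath.map (f := (SimpleGraph.Embedding.induce (G := G) s).toHom)
      Subtype.val_injective hp
  · intro z hz
    have hz' := (SimpleGraph.Walk.support_map (SimpleGraph.Embedding.induce (G := G) s).toHom p) ▸ hz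
    obtain ⟨a, -, rfl⟩ := List.mem_map.1 hz'
    exact a.2

lemma aux_sum {V : Type*} {G : SimpleGraph V} (φ : Sym2 V → ZMod 2) (σ : V → ZMod 2)
    {x y : V} (p : G.Walk x y) (h : ∀ a b, s(a, b) ∈ p.edges → φ s(a, b) = σ a + σ b) :
    (p.edges.map φ).sum = σ x + σ y := by
  induction p with
  | nil => simp [CharTwo.add_self_eq_zero]
  | @cons u v w hadj q ih =>
    rw [SimpleGraph.Walk.edges_cons, List.map_cons, List.sum_cons,
      ih (fun a b hab => h a b (by simp [hab])), h u v (by simp)]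
    have := CharTwo.add_self_eq_zero (σ v)
    linear_combination this

lemma aux_ray {V : Type*} {G : SimpleGraph V} {w : V} {r : ℕ → V} (hr : IsRay G w r)
    (K : Set V) (N : ℕ) (hN : ∀ n, N ≤ n → r n ∉ K) (n : ℕ) (hn : N ≤ n) :
    G.componentComplMk (hN n hn) = G.componentComplMk (hN N le_rfl) := by
  induction n, hn using Nat.le_induction with
  | base => rfl
  | succ n hn ih =>
    rw [← ih]
    exact (G.componentComplMk_eq_of_adj _ _ (hr.2.2 n)).symm

lemma aux_tail {V : Type*} {G : SimpleGraph V} {w : V} {r : ℕ → V} (hr : IsRay G w r)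
    (K : Finset V) : ∃ N, ∀ n, N ≤ n → r n ∉ (K : Set V) := by
  have hfin : (r ⁻¹' (K : Set V)).Finite := K.finite_toSet.preimage hr.1.injOn
  obtain ⟨M, hM⟩ := hfin.bddAbove
  refine ⟨M + 1, fun n hn hmem => ?_⟩
  have := hM (show n ∈ r ⁻¹' (K : Set V) from hmem)
  omega

lemma aux_end {V : Type*} {G : SimpleGraph V} {w : V} {r : ℕ → V} (hr : IsRay G w r) :
    ∃ s ∈ G.end, ∀ (K : Finset V) (N : ℕ) (hN : ∀ n, N ≤ n → r n ∉ (K : Set V)),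
      s (Opposite.op K) = G.componentComplMk (hN N le_rfl) := by
  choose N hN using aux_tail hr
  have key : ∀ (K : Finset V) (M M' : ℕ) (hM : ∀ n, M ≤ n → r n ∉ (K : Set V))
      (hM' : ∀ n, M' ≤ n → r n ∉ (K : Set V)),
      G.componentComplMk (hM M le_rfl) = G.componentComplMk (hM' M' le_rfl) := by
    intro K M M' hM hM'
    rw [← aux_ray hr K M hM (max M M') (le_max_left _ _),
      ← aux_ray hr K M' hM' (max M M') (le_max_right _ _)]
  refine ⟨fun K => G.componentComplMk (hN K.unop _ le_rfl), ?_, ?_⟩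
  · intro L K f
    have hKL : K.unop ⊆ L.unop := CategoryTheory.le_of_op_hom f
    exact key K.unop (N L.unop) (N K.unop) (fun n hn h => hN L.unop n hn (hKL h)) (hN K.unop)
  · intro K M hM
    exact key K _ _ _ _

lemma aux_ind {V : Type*} {G : SimpleGraph V} {x : V} (φ : Sym2 V → ZMod 2) (c : G.Walk x x)
    (hc : c.IsCycle) :
    Finsupp.linearCombination (ZMod 2) φ (walkIndicator c) = (c.edges.map φ).sum := by
  classical
  unfold walkIndicator
  rw [map_sum]
  simp only [Finsupp.linearCombination_single, one_smul]
  rw [← List.sum_toFinset φ hc.edges_nodup]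
  congr!

/-- Let `G` be an infinite, connected, locally finite, one-ended graph, `𝓑` a
Borel family of cycles generating the cycle space of `G`, and `F` a finite set of vertices
inducing a connected subgraph. Let `H` be the graph on `F` whose edges are the edges of
`G[F]` not in `ker F`. Then any two exterior vertices of `F` (vertices of `F` whose
`H`-component contains the initial vertex of a ray of `G` meeting `F` only at that vertex)
are joined by a path in `H`. -/
theorem stmt6 {V : Type*} [Infinite V] (G : SimpleGraph V)
    (hconn : G.Connected) (hlf : ∀ v : V, (G.neighborSet v).Finite)
    (hend : G.end.Nonempty ∧ G.end.Subsingleton)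
    (𝓑 : Set ((x : V) × G.Walk x x)) (h𝓑 : ∀ b ∈ 𝓑, b.2.IsCycle)
    (hgen : ∀ (x : V) (C : G.Walk x x), C.IsCycle →
      walkIndicator C ∈ Submodule.span (ZMod 2) ((fun b => walkIndicator b.2) '' 𝓑))
    (F : Set V) (hF : F.Finite) (hFconn : (G.induce F).Connected) :
    ∀ u v : V,
      (u ∈ F ∧ ∃ w ∈ F,
        (SimpleGraph.fromEdgeSet (edgesWithin G F \ kerEdges G 𝓑 F)).Reachable u w ∧
        ∃ r : ℕ → V, IsRay G w r ∧ ∀ n : ℕ, 0 < n → r n ∉ F) →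
      (v ∈ F ∧ ∃ w ∈ F,
        (SimpleGraph.fromEdgeSet (edgesWithin G F \ kerEdges G 𝓑 F)).Reachable v w ∧
        ∃ r : ℕ → V, IsRay G w r ∧ ∀ n : ℕ, 0 < n → r n ∉ F) →
      (SimpleGraph.fromEdgeSet (edgesWithin G F \ kerEdges G 𝓑 F)).Reachable u v := by
  classical
  set H := SimpleGraph.fromEdgeSet (edgesWithin G F \ kerEdges G 𝓑 F) with hH
  rintro u v ⟨-, w₁, hw₁, huw, r₁, hr₁, hr₁F⟩ ⟨-, w₂, hw₂, hvw, r₂, hr₂, hr₂F⟩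
  suffices h : H.Reachable w₁ w₂ from huw.trans (h.trans hvw.symm)
  by_contra hnot
  have hne : w₁ ≠ w₂ := by rintro rfl; exact hnot (SimpleGraph.Reachable.refl _)
  let σ : V → ZMod 2 := fun x => if H.Reachable w₁ x then 1 else 0
  let φ : Sym2 V → ZMod 2 := fun e => if e ∈ edgesWithin G F then
    Sym2.lift ⟨fun x y => σ x + σ y, fun x y => add_comm _ _⟩ e else 0
  have hφin : ∀ a b, s(a, b) ∈ edgesWithin G F → φ s(a, b) = σ a + σ b := by
    intro a b h
    simp [φ, h]
  have hφout : ∀ e, e ∉ edgesWithin G F → φ e = 0 := by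
    intro e h
    simp [φ, h]
  have hφker : ∀ e, φ e ≠ 0 → e ∈ kerEdges G 𝓑 F := by
    intro e he
    by_contra hk
    have hin : e ∈ edgesWithin G F := by
      by_contra h; exact he (hφout e h)
    induction e using Sym2.ind with
    | _ a b =>
    apply he
    rw [hφin a b hin]
    have hab : H.Adj a b := by
      rw [hH, SimpleGraph.fromEdgeSet_adj]
      exact ⟨⟨hin, hk⟩, (show G.Adj a b from hin.1).ne⟩
    have : σ a = σ b := by
      have : H.Reachable w₁ a ↔ H.Reachable w₁ b :=
        ⟨fun h => h.trans hab.reachable, fun h => h.trans hab.symm.reachable⟩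
      simp [σ, this]
    rw [this, CharTwo.add_self_eq_zero]
  have hB : ∀ b ∈ 𝓑, (b.2.edges.map φ).sum = 0 := by
    intro b hb
    by_cases h : ∃ e ∈ b.2.edges, φ e ≠ 0
    · obtain ⟨e, he, hφe⟩ := h
      have hall := (hφker e hφe).2 b hb he
      rw [aux_sum φ σ b.2 (fun x y hxy => hφin x y (hall _ hxy)), CharTwo.add_self_eq_zero]
    · push Not at h
      apply List.sum_eq_zero
      intro z hz
      obtain ⟨e, he, rfl⟩ := List.mem_map.1 hz
      exact h e he
  have hcyc : ∀ (x : V) (C : G.Walk x x), C.IsCycle → (C.edges.map φ).sum = 0 := by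
    intro x C hC
    rw [← aux_ind φ C hC]
    have hle : Submodule.span (ZMod 2) ((fun b : (x : V) × G.Walk x x => walkIndicator b.2) '' 𝓑) ≤
        LinearMap.ker (Finsupp.linearCombination (ZMod 2) φ) := by
      rw [Submodule.span_le]
      rintro _ ⟨b, hb, rfl⟩
      change Finsupp.linearCombination (ZMod 2) φ (walkIndicator b.2) = 0
      rw [aux_ind φ b.2 (h𝓑 b hb), hB b hb]
    exact hle (hgen x C hC)
  -- the outside path
  have hout : ∃ q : G.Walk (r₁ 1) (r₂ 1), q.IsPath ∧ ∀ z ∈ q.support, z ∈ Fᶜ := by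
    obtain ⟨s₁, hs₁, h₁⟩ := aux_end hr₁
    obtain ⟨s₂, hs₂, h₂⟩ := aux_end hr₂
    have hs := hend.2 hs₁ hs₂
    obtain ⟨K, rfl⟩ := hF.exists_finset_coe
    have e := (h₁ K 1 (fun n hn => hr₁F n hn)).symm.trans
      ((congrFun hs _).trans (h₂ K 1 (fun n hn => hr₂F n hn)))
    exact aux_path (SimpleGraph.ConnectedComponent.eq.1 e)
  obtain ⟨q, hq, hqF⟩ := hout
  obtain ⟨p, hp, hpF⟩ := aux_path (hFconn.preconnected ⟨w₂, hw₂⟩ ⟨w₁, hw₁⟩)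
  simp only at p hp hpF
  have a₁ : G.Adj w₁ (r₁ 1) := by have := hr₁.2.2 0; rwa [hr₁.2.1] at this
  have a₂ : G.Adj (r₂ 1) w₂ := by have := hr₂.2.2 0; rw [hr₂.2.1] at this; exact this.symm
  have n₁ := hr₁F 1 one_pos
  have n₂ := hr₂F 1 one_pos
  have hC : (SimpleGraph.Walk.cons a₁ (q.append (SimpleGraph.Walk.cons a₂ p))).IsCycle := by
    rw [SimpleGraph.Walk.cons_isCycle_iff]
    constructor
    · rw [SimpleGraph.Walk.isPath_def, SimpleGraph.Walk.support_append,
        SimpleGraph.Walk.support_cons, List.tail_cons, List.nodup_append']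
      exact ⟨hq.support_nodup, hp.support_nodup, fun z hz hz' => hqF z hz (hpF z hz')⟩
    · rw [SimpleGraph.Walk.edges_append, SimpleGraph.Walk.edges_cons, List.mem_append,
        List.mem_cons]
      rintro (h | h | h)
      · exact hqF _ (q.fst_mem_support_of_mem_edges h) hw₁
      · rcases Sym2.eq_iff.1 h with ⟨h, -⟩ | ⟨h, -⟩
        · exact n₂ (h ▸ hw₁)
        · exact hne h
      · exact n₁ (hpF _ (p.snd_mem_support_of_mem_edges h))
  have hsum := hcyc _ _ hC
  rw [SimpleGraph.Walk.edges_cons, SimpleGraph.Walk.edges_append, SimpleGraph.Walk.edges_cons,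
    List.map_cons, List.map_append, List.map_cons, List.sum_cons, List.sum_append, List.sum_cons,
    hφout s(w₁, r₁ 1) (fun h => n₁ (h.2 _ (Sym2.mem_mk_right _ _))),
    hφout s(r₂ 1, w₂) (fun h => n₂ (h.2 _ (Sym2.mem_mk_left _ _))),
    aux_sum φ σ p (fun a b hab => hφin a b ⟨p.edges_subset_edgeSet hab, by
      intro z hz
      rcases Sym2.mem_iff.1 hz with rfl | rfl
      · exact hpF _ (p.fst_mem_support_of_mem_edges hab)
      · exact hpF _ (p.snd_mem_support_of_mem_edges hab)⟩)] at hsum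
  have hq0 : (q.edges.map φ).sum = 0 := by
    apply List.sum_eq_zero
    intro z hz
    obtain ⟨e, he, rfl⟩ := List.mem_map.1 hz
    induction e using Sym2.ind with
    | _ a b =>
    exact hφout _ (fun h => hqF _ (q.fst_mem_support_of_mem_edges he)
      (h.2 _ (Sym2.mem_mk_left _ _)))
  rw [hq0] at hsum
  simp [σ, hnot] at hsum
end

section
/- Let T be an infinite, locally finite tree (a connected acyclic simple graph) with exactly one end, on vertex set V. Define recursively V₀ = V and V_{n+1} = the set of vertices of V_n whose degree in the induced subgraph T[V_n] is at least 2 (i.e., V_{n+1} is obtained from V_n by removing the isolated vertices and leaves of T[V_n]). Then for every n: the set V_n is nonempty, the induced subgraph T[V_n] is a tree (connected and acyclic) with exactly one end, and every connected component of the induced subgraph T[V ∖ V_n] is finite. -/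
open SimpleGraph

/-- Iterated leaf-removal: `leafPeel T 0 = V` and `leafPeel T (n+1)` consists of those
vertices of `leafPeel T n` having degree at least 2 in the induced subgraph
`T[leafPeel T n]`. -/
def leafPeel {V : Type*} (T : SimpleGraph V) : ℕ → Set V
  | 0 => Set.univ
  | n + 1 => {v ∈ leafPeel T n | 2 ≤ (T.neighborSet v ∩ leafPeel T n).ncard}

universe u

open CategoryTheory in
lemma aux_end_infinite_s10 {V : Type u} (G : SimpleGraph V) (s) (hs : s ∈ G.end) (K : Finset V) :
    (s (Opposite.op K)).supp.Infinite := by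
  refine (ComponentCompl.infinite_iff_in_all_ranges _).mpr (fun L h => ?_)
  exact ⟨s (Opposite.op L), hs (opHomOfLE (x := Opposite.op K) (y := Opposite.op L) h)⟩

open CategoryTheory in
lemma aux_end_nonempty {V : Type u} (G : SimpleGraph V) [Infinite V] (hG : G.Preconnected)
    (hlf : ∀ v : V, (G.neighborSet v).Finite) : G.end.Nonempty := by
  classical
  have : LocallyFinite G := fun v => (hlf v).fintype
  have : Fact G.Preconnected := ⟨hG⟩
  have : ∀ K, Finite (G.componentComplFunctor.obj K) := fun K => G.componentCompl_finite K.unop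
  have : ∀ K, Nonempty (G.componentComplFunctor.obj K) :=
    fun K => G.componentCompl_nonempty_of_infinite K.unop
  exact nonempty_sections_of_finite_inverse_system G.componentComplFunctor

open CategoryTheory in
lemma aux_unique {V : Type u} (G : SimpleGraph V) [Infinite V] (hG : G.Preconnected)
    (hlf : ∀ v : V, (G.neighborSet v).Finite) (hs : G.end.Subsingleton) (K : Finset V)
    (C D : G.ComponentCompl K) (hC : C.supp.Infinite) (hD : D.supp.Infinite) : C = D := by
  classical
  have : LocallyFinite G := fun v => (hlf v).fintype
  have : Fact G.Preconnected := ⟨hG⟩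
  have : ∀ K, Finite (G.componentComplFunctor.obj K) := fun K => G.componentCompl_finite K.unop
  have : ∀ K, Nonempty (G.componentComplFunctor.obj K) :=
    fun K => G.componentCompl_nonempty_of_infinite K.unop
  let F := G.componentComplFunctor
  have hML : F.IsMittagLeffler := F.isMittagLeffler_of_exists_finite_range
    fun j => ⟨j, 𝟙 j, Set.toFinite _⟩
  have : ∀ K, Nonempty (F.toEventualRanges.obj K) := F.toEventualRanges_nonempty hML
  have : ∀ K, Finite (F.toEventualRanges.obj K) := fun K =>
    inferInstanceAs (Finite (F.eventualRange K))
  have hsurj := F.toEventualRanges.eval_section_surjective_of_surjective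
    (F.surjective_toEventualRanges hML) (Opposite.op K)
  have key : ∀ E : G.ComponentCompl K, E.supp.Infinite → ∃ s ∈ G.end, s (Opposite.op K) = E := by
    intro E hE
    obtain ⟨t, ht⟩ := hsurj ⟨E, (G.infinite_iff_in_eventualRange (K := Opposite.op K) E).1 hE⟩
    exact ⟨(F.toEventualRangesSectionsEquiv t).1, (F.toEventualRangesSectionsEquiv t).2,
      congrArg Subtype.val ht⟩
  obtain ⟨s, h1, rfl⟩ := key C hC
  obtain ⟨t, h2, rfl⟩ := key D hD
  rw [hs h1 h2]

lemma aux_reach {V : Type u} (G : SimpleGraph V) (S : Set V) (a b : S) :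
    (G.induce S).Reachable a b ↔ ∃ p : G.Walk a b, p.IsPath ∧ ∀ x ∈ p.support, x ∈ S := by
  constructor
  · intro h
    obtain ⟨p, hp⟩ := h.exists_isPath
    have h0 : ∀ x ∈ (p.map (Embedding.induce (G := G) S).toHom).support, x ∈ S := by
      intro x hx
      rw [Walk.support_map, List.mem_map] at hx
      obtain ⟨y, -, rfl⟩ := hx
      exact y.2
    exact ⟨p.map (Embedding.induce S).toHom,
      (Walk.isPath_map_iff_of_injective (Embedding.induce (G := G) S).injective).2 hp, h0⟩
  · rintro ⟨p, -, h⟩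
    exact ⟨p.induce S h⟩

lemma aux_sub {V : Type u} (T : SimpleGraph V) (hacyc : T.IsAcyclic) (U : Set V)
    (hU : (T.induce U).Preconnected) (a b : V) (ha : a ∈ U) (hb : b ∈ U) (p : T.Walk a b)
    (hp : p.IsPath) : ∀ x ∈ p.support, x ∈ U := by
  obtain ⟨q, hq, hqU⟩ := (aux_reach T U ⟨a, ha⟩ ⟨b, hb⟩).1 (hU _ _)
  have := congrArg Subtype.val ((hacyc.subsingleton_path a b).elim ⟨p, hp⟩ ⟨q, hq⟩)
  simp only at this
  subst this
  exact hqU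

lemma aux_induce_lf {V : Type u} (T : SimpleGraph V) (hlf : ∀ v : V, (T.neighborSet v).Finite)
    (U : Set V) (v : U) : ((T.induce U).neighborSet v).Finite := by
  have := (hlf v).preimage (Subtype.val_injective (p := (· ∈ U))).injOn
  exact this.subset fun w hw => hw

lemma aux_comp_inf {V : Type u} (T : SimpleGraph V) (U : Set V) (K : Finset U)
    (L : Set V) (hL : L = Subtype.val '' (K : Set U))
    (a : U) (ha : a ∉ (K : Set U)) (ha' : a.1 ∉ L)
    (h : ((T.induce U).componentComplMk ha).supp.Infinite) :
    (T.componentComplMk ha').supp.Infinite := by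
  subst hL
  refine (h.image Subtype.val_injective.injOn).mono ?_
  rintro _ ⟨x, ⟨hx, hxa⟩, rfl⟩
  have hx' : x.1 ∉ Subtype.val '' (K : Set U) := by simpa using hx
  refine ⟨hx', ?_⟩
  rw [ConnectedComponent.eq] at hxa ⊢
  let f : (T.induce U).induce (K : Set U)ᶜ →g T.induce (Subtype.val '' (K : Set U))ᶜ :=
    { toFun := fun y => ⟨y.1.1, by
        rintro ⟨z, hz, hzy⟩
        exact y.2 ((Subtype.ext hzy : z = y.1) ▸ hz)⟩
      map_rel' := fun h => h }
  exact hxa.map f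

lemma aux_main {V : Type u} [Infinite V] (T : SimpleGraph V)
    (hconn : T.Connected) (hacyc : T.IsAcyclic)
    (hlf : ∀ v : V, (T.neighborSet v).Finite) (hs : T.end.Subsingleton)
    (U : Set V) (hUi : U.Infinite) (hU : (T.induce U).Preconnected) :
    (T.induce U).end.Nonempty ∧ (T.induce U).end.Subsingleton ∧
      (∀ c : (T.induce Uᶜ).ConnectedComponent, c.supp.Finite) := by
  classical
  have : Infinite U := hUi.to_subtype
  have hne := aux_end_nonempty (T.induce U) hU (aux_induce_lf T hlf U)
  refine ⟨hne, ?_, ?_⟩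
  · intro s h1 t h2
    funext K
    obtain ⟨K⟩ := K
    have i1 := aux_end_infinite_s10 _ s h1 K
    have i2 := aux_end_infinite_s10 _ t h2 K
    obtain ⟨a, ha, hae⟩ := ComponentCompl.exists_eq_mk (s (Opposite.op K))
    obtain ⟨b, hb, hbe⟩ := ComponentCompl.exists_eq_mk (t (Opposite.op K))
    rw [← hae] at i1 ⊢
    rw [← hbe] at i2 ⊢
    have hL : ((K.map (Function.Embedding.subtype (· ∈ U)) : Finset V) : Set V) =
      Subtype.val '' (K : Set U) := by simp
    have ha' : a.1 ∉ ((K.map (Function.Embedding.subtype (· ∈ U)) : Finset V) : Set V) := by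
      rw [hL]; simpa using ha
    have hb' : b.1 ∉ ((K.map (Function.Embedding.subtype (· ∈ U)) : Finset V) : Set V) := by
      rw [hL]; simpa using hb
    have := aux_unique T hconn.preconnected hlf hs _ _ _
      (aux_comp_inf T U K _ hL a ha ha' i1) (aux_comp_inf T U K _ hL b hb hb' i2)
    rw [ConnectedComponent.eq, aux_reach] at this
    obtain ⟨p, hp, hpK⟩ := this
    have hpU := aux_sub T hacyc U hU a b a.2 b.2 p hp
    refine ConnectedComponent.eq.2 ?_
    refine ⟨(p.induce U hpU).induce _ ?_⟩
    intro x hx hxK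
    have hx' : x.1 ∈ p.support := by
      have h3 := congrArg Walk.support (Walk.map_induce p hpU)
      rw [Walk.support_map] at h3
      exact (congrArg (x.1 ∈ ·) h3).mp (List.mem_map.2 ⟨x, hx, rfl⟩)
    apply hpK _ hx'
    rw [hL]
    exact ⟨x, hxK, rfl⟩
  · intro C
    by_contra hC
    have hC : C.supp.Infinite := hC
    obtain ⟨⟨c, u⟩, hcC, hu, hadj⟩ := ComponentCompl.exists_adj_boundary_pair
      hconn.preconnected hUi.nonempty C
    simp only at hcC hu hadj
    obtain ⟨hcU, hcC⟩ := hcC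
    have hcu : c ∉ (({u} : Finset V) : Set V) := by
      simp only [Finset.coe_singleton, Set.mem_singleton_iff]
      rintro rfl
      exact hcU hu
    have hc : (T.componentComplMk hcu).supp.Infinite := by
      refine (hC.image Subtype.val_injective.injOn).mono ?_
      rintro _ ⟨x, hx, rfl⟩
      have hxu : x.1 ∉ (({u} : Finset V) : Set V) := by
        simp only [Finset.coe_singleton, Set.mem_singleton_iff]
        intro h
        exact x.2 (h ▸ hu)
      refine ⟨hxu, ?_⟩
      rw [ConnectedComponent.mem_supp_iff, ← hcC, ConnectedComponent.eq] at hx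
      rw [ConnectedComponent.eq]
      exact hx.map (induceHom Hom.id (s := Uᶜ) (t := (({u} : Finset V) : Set V)ᶜ) (by
        intro y hy hyu
        simp only [Finset.coe_singleton, Set.mem_singleton_iff] at hyu
        apply hy
        rw [show y = u from hyu]
        exact hu))
    obtain ⟨s, hs1⟩ := hne
    have i1 := aux_end_infinite_s10 _ s hs1 {⟨u, hu⟩}
    obtain ⟨d, hd, hde⟩ := ComponentCompl.exists_eq_mk (s (Opposite.op {⟨u, hu⟩}))
    rw [← hde] at i1
    have hL : (({u} : Finset V) : Set V) =
      Subtype.val '' ((({⟨u, hu⟩} : Finset U)) : Set U) := by simp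
    have hd' : d.1 ∉ (({u} : Finset V) : Set V) := by
      rw [hL]
      rintro ⟨z, hz, hzy⟩
      exact hd ((Subtype.ext hzy : z = d) ▸ hz)
    have := aux_unique T hconn.preconnected hlf hs _ _ _ hc (aux_comp_inf T U _ _ hL d hd hd' i1)
    rw [ConnectedComponent.eq, aux_reach] at this
    obtain ⟨p, hp, hpK⟩ := this
    have hp2 : (Walk.cons hadj.symm p).IsPath := by
      rw [Walk.cons_isPath_iff]
      refine ⟨hp, fun h => hpK _ h (by simp)⟩
    exact hcU (aux_sub T hacyc U hU u d hu d.2 _ hp2 c (by simp))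

lemma aux_step {V : Type u} (T : SimpleGraph V)
    (hlf : ∀ v : V, (T.neighborSet v).Finite)
    (U W : Set V) (hW : W = {v ∈ U | 2 ≤ (T.neighborSet v ∩ U).ncard})
    (hUi : U.Infinite) (hU : (T.induce U).Preconnected) :
    W.Infinite ∧ (T.induce W).Preconnected := by
  have hWU : W ⊆ U := by rw [hW]; exact fun x hx => hx.1
  have hsub : ∀ v ∈ U, v ∉ W → (T.neighborSet v ∩ U).Subsingleton := by
    intro v hv hvW
    have : (T.neighborSet v ∩ U).ncard ≤ 1 := by
      by_contra h
      apply hvW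
      rw [hW]
      exact ⟨hv, by omega⟩
    exact (have := ((hlf v).subset (Set.inter_subset_left (t := U))).to_subtype; Set.ncard_le_one_iff_subsingleton.1 ‹_›)
  constructor
  · intro hfin
    apply hUi
    have hN : (W ∪ ⋃ w ∈ W, T.neighborSet w).Finite :=
      hfin.union (hfin.biUnion fun w _ => hlf w)
    refine hN.subset ?_
    intro v hv
    by_contra hcon
    simp only [Set.mem_union, Set.mem_iUnion, mem_neighborSet, not_or, not_exists] at hcon
    obtain ⟨hvW, hvN⟩ := hcon
    -- the set of v and its neighbours in U is closed
    have hF : ({v} ∪ T.neighborSet v : Set V).Finite := (Set.finite_singleton v).union (hlf v)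
    obtain ⟨x, hxU, hxF⟩ := (hUi.sdiff hF).nonempty
    obtain ⟨p⟩ := hU ⟨v, hv⟩ ⟨x, hxU⟩
    obtain ⟨⟨⟨y, z⟩, hyz⟩, -, hy, hz⟩ :=
      p.exists_boundary_dart {y | y.1 ∈ ({v} ∪ T.neighborSet v : Set V)} (by simp) (by simpa using hxF)
    have hyz' : T.Adj y.1 z.1 := hyz
    simp only [Set.mem_ofPred_eq, Set.mem_union, Set.mem_singleton_iff, mem_neighborSet, not_or]
      at hy hz
    rcases hy with hy | hy
    · exact hz.2 (hy ▸ hyz')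
    · have hyW : y.1 ∉ W := fun h => hvN _ h hy.symm
      exact hz.1 (hsub y.1 y.2 hyW ⟨hyz', z.2⟩ ⟨hy.symm, hv⟩)
  · have h1 : ((T.induce U).induce {x : U | x.1 ∈ W}).Preconnected := by
      apply hU.induce_of_degree_eq_one
      intro v hv a ha b hb
      exact Subtype.ext (hsub v.1 v.2 hv ⟨ha, a.2⟩ ⟨hb, b.2⟩)
    intro a b
    let f : (T.induce U).induce {x : U | x.1 ∈ W} →g T.induce W :=
      { toFun := fun y => ⟨y.1.1, y.2⟩
        map_rel' := fun h => h }
    exact (h1 ⟨⟨a.1, hWU a.2⟩, a.2⟩ ⟨⟨b.1, hWU b.2⟩, b.2⟩).map f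

/-- For an infinite, locally finite, one-ended tree `T`, each stage `Vₙ` of
the iterated leaf-removal is nonempty, induces a one-ended tree, and every connected
component of the subgraph induced on the complement of `Vₙ` is finite. -/
theorem stmt10 {V : Type*} [Infinite V] (T : SimpleGraph V)
    (hconn : T.Connected) (hacyc : T.IsAcyclic)
    (hlf : ∀ v : V, (T.neighborSet v).Finite)
    (hend : T.end.Nonempty ∧ T.end.Subsingleton) :
    ∀ n : ℕ,
      (leafPeel T n).Nonempty ∧
      (T.induce (leafPeel T n)).Connected ∧
      (T.induce (leafPeel T n)).IsAcyclic ∧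
      (T.induce (leafPeel T n)).end.Nonempty ∧
      (T.induce (leafPeel T n)).end.Subsingleton ∧
      (∀ c : (T.induce (leafPeel T n)ᶜ).ConnectedComponent, c.supp.Finite) := by
  have key : ∀ n, (leafPeel T n).Infinite ∧ (T.induce (leafPeel T n)).Preconnected := by
    intro n
    induction n with
    | zero =>
      refine ⟨Set.infinite_univ, ?_⟩
      intro a b
      rw [aux_reach]
      obtain ⟨p, hp⟩ := hconn.preconnected.exists_isPath a.1 b.1
      exact ⟨p, hp, fun x _ => Set.mem_univ x⟩
    | succ n ih => exact aux_step T hlf _ _ rfl ih.1 ih.2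
  intro n
  obtain ⟨hi, hp⟩ := key n
  obtain ⟨h1, h2, h3⟩ := aux_main T hconn hacyc hlf hend.2 _ hi hp
  have := hi.nonempty.to_subtype
  exact ⟨hi.nonempty, ⟨hp⟩, hacyc.induce _, h1, h2, h3⟩
end

section
/- Let G be a finite, connected simple graph that is 3-edge-connected: for every pair of edges e, f of G, the graph obtained from G by deleting e and f is still connected. Then there exist three spanning trees T₁, T₂, T₃ of G such that every edge of G belongs to at most two of T₁, T₂, T₃. -/
open SimpleGraph

namespace Pack

variable {V : Type*}

def Crs (A : V → Bool) (s : Sym2 V) : Prop := ¬ (s.map A).IsDiag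

lemma crs_mk (A : V → Bool) (x y : V) : Crs A s(x, y) ↔ A x ≠ A y := by
  simp [Crs]

lemma crs_xor (A B : V → Bool) (s : Sym2 V) :
    Crs (fun v => xor (A v) (B v)) s ↔ ¬ (Crs A s ↔ Crs B s) := by
  induction s using Sym2.ind with
  | _ x y =>
    rw [crs_mk, crs_mk, crs_mk]
    cases A x <;> cases A y <;> cases B x <;> cases B y <;> simp

abbrev Col (V : Type*) := Sym2 V → Option (Fin 3)

def Valid (E : Set (Sym2 V)) (c : Col V) : Prop :=
  ∀ (j : Fin 3) (A : V → Bool), (∃ s ∈ E, Crs A s) → ∃ s ∈ E, Crs A s ∧ c s ≠ some j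

open Classical in
noncomputable def mv (c : Col V) (e f : Sym2 V) (j : Fin 3) : Col V :=
  fun s => if s = e then some j else if s = f then none else c s

inductive Reach (E : Set (Sym2 V)) (c0 : Col V) (e0 : Sym2 V) : Col V → Sym2 V → Prop
  | refl : Reach E c0 e0 c0 e0
  | move (c e f j) : Reach E c0 e0 c e → c f = some j → f ∈ E → Valid E (mv c e f j) →
      Reach E c0 e0 (mv c e f j) f

/-- `s` is a bridge in the graph with edge set `K`. -/
def Brd (K : Set (Sym2 V)) (s : Sym2 V) : Prop :=
  ∃ A : V → Bool, Crs A s ∧ ∀ t ∈ K, Crs A t → t = s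

def N (E : Set (Sym2 V)) (c : Col V) : Set (Sym2 V) := {s | s ∈ E ∧ c s = none}

lemma reach_inv [Finite V] {E : Set (Sym2 V)} {c0 : Col V} {e0 : Sym2 V} (he : e0 ∈ E)
    (hc : c0 e0 = none) (hv : Valid E c0) {c e} (h : Reach E c0 e0 c e) :
    e ∈ E ∧ c e = none ∧ Valid E c ∧ (N E c).ncard = (N E c0).ncard := by
  induction h with
  | refl => exact ⟨he, hc, hv, rfl⟩
  | move c e f j hr hf hfE hval ih =>
    obtain ⟨h1, h2, h3, h4⟩ := ih
    have hne : f ≠ e := by rintro rfl; simp [h2] at hf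
    refine ⟨hfE, by simp [mv, hne], hval, ?_⟩
    rw [← h4]
    have h5 : N E (mv c e f j) = insert f (N E c \ {e}) := by
      ext s
      simp only [N, mv, Set.mem_setOf_eq, Set.mem_insert_iff, Set.mem_sdiff, Set.mem_singleton_iff]
      by_cases hs : s = e
      · subst hs; simp [Ne.symm hne]
      · by_cases hs' : s = f
        · subst hs'; simp [hs, hfE]
        · simp [hs, hs']
    rw [h5, Set.ncard_insert_of_notMem (by simp [N, hf]) (Set.toFinite _),
      Set.ncard_sdiff_singleton_add_one (by simp [N, h1, h2]) (Set.toFinite _)]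

lemma aug [Finite V] {E : Set (Sym2 V)} {c : Col V} {e : Sym2 V} (he : e ∈ E)
    (hc : c e = none) (hv : Valid E c)
    (hmin : ∀ c', Valid E c' → (N E c).ncard ≤ (N E c').ncard) (j : Fin 3) :
    ∃ A : V → Bool, Crs A e ∧ ∀ t ∈ E, Crs A t → t ≠ e → c t = some j := by
  classical
  set c' : Col V := fun s => if s = e then some j else c s with hc'
  have hnv : ¬ Valid E c' := by
    intro h
    have h1 := hmin c' h
    have h2 : N E c' = N E c \ {e} := by
      ext s
      by_cases hs : s = e <;> simp [N, hc', hs]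
    have h3 := Set.ncard_sdiff_singleton_add_one (s := N E c) (a := e) (by simp [N, he, hc])
      (Set.toFinite _)
    rw [h2] at h1
    omega
  simp only [Valid, not_forall] at hnv
  obtain ⟨i, A, ⟨s, hsE, hs⟩, hA⟩ := hnv
  push Not at hA
  have hij : i = j ∧ Crs A e := by
    obtain ⟨t, htE, ht, htc⟩ := hv i A ⟨s, hsE, hs⟩
    have := hA t htE ht
    by_cases hte : t = e
    · subst hte; simp [hc'] at this; exact ⟨this.symm, ht⟩
    · simp [hc', hte] at this; exact absurd this htc
  obtain ⟨rfl, h2⟩ := hij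
  refine ⟨A, h2, fun t htE ht hte => ?_⟩
  have := hA t htE ht
  simpa [hc', hte] using this

lemma mv_valid {E : Set (Sym2 V)} {c : Col V} {e f : Sym2 V} {j : Fin 3} 
    (hc : c e = none) (hv : Valid E c) {A : V → Bool} (hA : Crs A e)
    (hA' : ∀ t ∈ E, Crs A t → t ≠ e → c t = some j) (hf : f ∈ E) (hfA : Crs A f) (hfe : f ≠ e) :
    Valid E (mv c e f j) := by
  have hfc := hA' f hf hfA hfe
  intro i B ⟨s, hsE, hs⟩
  by_contra hcon
  push Not at hcon
  by_cases hij : i = j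
  · subst hij
    have hfB : ¬ Crs B f := fun h => by
      have := hcon f hf h
      simp [mv, hfe] at this
    have key : ∀ t ∈ E, c t ≠ some i → t ≠ e → ¬ Crs B t := by
      intro t ht htc hte h
      have := hcon t ht h
      by_cases htf : t = f
      · subst htf; exact hfB h
      · simp [mv, hte, htf] at this; exact htc this
    obtain ⟨t, htE, ht, htc⟩ := hv i B ⟨s, hsE, hs⟩
    have hte : t = e := by
      by_contra hte; exact key t htE htc hte ht
    subst hte
    obtain ⟨r, hrE, hr, hrc⟩ := hv i (fun v => xor (A v) (B v)) ⟨f, hf, by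
      rw [crs_xor]; tauto⟩
    rw [crs_xor] at hr
    have hrt : r ≠ t := by rintro rfl; tauto
    have h1 := key r hrE hrc hrt
    have h2 : ¬ Crs A r := fun h => hrc (hA' r hrE h hrt)
    tauto
  · obtain ⟨t, htE, ht, htc⟩ := hv i B ⟨s, hsE, hs⟩
    have := hcon t htE ht
    by_cases hte : t = e
    · subst hte; simp [mv] at this; exact hij this.symm
    · by_cases htf : t = f
      · subst htf; simp [mv, hte] at this
      · simp [mv, hte, htf] at this; exact htc this

def KK (E S : Set (Sym2 V)) (c : Col V) (j : Fin 3) : Set (Sym2 V) :=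
  {t | t ∈ E ∧ ¬ (t ∈ S ∧ c t = some j)}

/-- exchanging a bridge preserves bridges -/
lemma brd_swap {K K' : Set (Sym2 V)} {e f s : Sym2 V} 
    (hKK : ∀ t, t ∈ K' → t ≠ f → t ∈ K ∧ t ≠ e) 
    (hf : Brd K' f) (hs : Brd K s) (hse : s ≠ e) (hsf : s ≠ f) (hsK' : s ∈ K') : Brd K' s := by
  obtain ⟨A, hA, hA'⟩ := hs
  obtain ⟨B, hB, hB'⟩ := hf
  by_cases h : Crs A f
  · refine ⟨fun v => xor (A v) (B v), ?_, ?_⟩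
    · rw [crs_xor]
      have : ¬ Crs B s := fun h => hsf (hB' s hsK' h)
      tauto
    · intro t ht
      rw [crs_xor]
      intro hx
      by_cases htf : t = f
      · subst htf; tauto
      · have h1 : ¬ Crs B t := fun h => htf (hB' t ht h)
        exact hA' t (hKK t ht htf).1 (by tauto)
  · refine ⟨A, hA, fun t ht htA => ?_⟩
    by_cases htf : t = f
    · subst htf; exact absurd htA h
    · exact hA' t (hKK t ht htf).1 htA

lemma main_brd [Finite V] {E : Set (Sym2 V)} {c0 : Col V} {e0 : Sym2 V} (he : e0 ∈ E)
    (hc : c0 e0 = none) (hv : Valid E c0)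
    (hmin : ∀ c', Valid E c' → (N E c0).ncard ≤ (N E c').ncard) :
    ∃ S ⊆ E, e0 ∈ S ∧ ∀ s ∈ S, ∀ j, c0 s ≠ some j → Brd (KK E S c0 j) s := by
  set S : Set (Sym2 V) := {s | ∃ c, Reach E c0 e0 c s} with hS
  have hbr : ∀ c e, Reach E c0 e0 c e → ∀ j, Brd (KK E S c j) e := by
    intro c e hr j
    obtain ⟨h1, h2, h3, h4⟩ := reach_inv he hc hv hr
    obtain ⟨A, hA, hA'⟩ := aug h1 h2 h3 (fun c' h => h4 ▸ hmin c' h) j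
    refine ⟨A, hA, fun t ht htA => ?_⟩
    by_contra hte
    refine ht.2 ⟨⟨_, Reach.move c e t j hr (hA' t ht.1 htA hte) ht.1 ?_⟩, hA' t ht.1 htA hte⟩
    exact mv_valid h2 h3 hA hA' ht.1 htA hte
  have htr : ∀ c e, Reach E c0 e0 c e → ∀ s ∈ S, s ∈ E → ∀ j,
      ((c s ≠ some j → Brd (KK E S c j) s) ↔ (c0 s ≠ some j → Brd (KK E S c0 j) s)) := by
    intro c e hr
    induction hr with
    | refl => intros; rfl
    | move c e f i hr hf hfE hval ih =>
      intro s hs hsE j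
      rw [← ih s hs hsE j]
      obtain ⟨h1, h2, h3, h4⟩ := reach_inv he hc hv hr
      have hne : f ≠ e := by rintro rfl; simp [h2] at hf
      have hr' := Reach.move c e f i hr hf hfE hval
      have heS : e ∈ S := ⟨_, hr⟩
      have hfS : f ∈ S := ⟨_, hr'⟩
      have hb := hbr _ _ hr j
      have hb' := hbr _ _ hr' j
      by_cases hse : s = e
      · subst hse
        refine ⟨fun _ _ => hb, fun _ h => ?_⟩
        by_cases hij : i = j
        · simp [mv, hij] at h
        · have : KK E S (mv c s f i) j = KK E S c j := by
            ext t
            by_cases hte : t = s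
            · subst hte; simp [KK, mv, hij, h2]
            · by_cases htf : t = f
              · subst htf; simp [KK, mv, hte, hij, hf]
              · simp [KK, mv, hte, htf]
          rw [this]; exact hb
      by_cases hij : i = j
      · subst hij
        by_cases hsf : s = f
        · subst hsf
          exact ⟨fun _ h => absurd hf h, fun _ _ => hb'⟩
        have hcs : mv c e f i s = c s := by simp [mv, hse, hsf]
        rw [hcs]
        refine ⟨fun h h' => ?_, fun h h' => ?_⟩
        · refine brd_swap (K := KK E S (mv c e f i) i) (f := e) (e := f) ?_ hb (h h') hsf hse
            ⟨hsE, fun h => h' h.2⟩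
          intro t ht hte
          have htf : t ≠ f := by rintro rfl; exact ht.2 ⟨hfS, hf⟩
          refine ⟨?_, htf⟩
          simpa [KK, mv, hte, htf] using ht
        · refine brd_swap (K := KK E S c i) (f := f) (e := e) ?_ hb' (h h') hse hsf
            ⟨hsE, fun h => h' (hcs ▸ h.2)⟩
          intro t ht htf
          have hte : t ≠ e := by rintro rfl; exact ht.2 ⟨heS, by simp [mv]⟩
          refine ⟨?_, hte⟩
          simpa [KK, mv, hte, htf] using ht
      · have h5 : KK E S (mv c e f i) j = KK E S c j := by
          ext t
          by_cases hte : t = e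
          · subst hte; simp [KK, mv, hij, h2]
          · by_cases htf : t = f
            · subst htf; simp [KK, mv, hte, hij, hf]
            · simp [KK, mv, hte, htf]
        rw [h5]
        by_cases hsf : s = f
        · subst hsf; rw [h5] at hb'
          exact ⟨fun _ _ => hb', fun _ _ => hb'⟩
        · simp [mv, hse, hsf]
  have hSE : S ⊆ E := fun s ⟨c, hr⟩ => (reach_inv he hc hv hr).1
  refine ⟨S, hSE, ⟨_, Reach.refl⟩, fun s hs j => ?_⟩
  obtain ⟨c, hr⟩ := hs
  exact (htr c s hr s ⟨c, hr⟩ (hSE ⟨c, hr⟩) j).1 (fun _ => hbr c s hr j)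

lemma reach_const {K : SimpleGraph V} {A : V → Bool}
    (h : ∀ s ∈ K.edgeSet, ¬ Crs A s) {x y : V} (hr : K.Reachable x y) : A x = A y := by
  obtain ⟨w⟩ := hr
  induction w with
  | nil => rfl
  | cons hadj _ ih =>
    rw [← ih]
    have := h s(_, _) hadj
    rw [crs_mk] at this
    simpa using this

lemma conn_of_cuts {K : SimpleGraph V} [Nonempty V]
    (h : ∀ A : V → Bool, (∀ s ∈ K.edgeSet, ¬ Crs A s) → ∀ x y, A x = A y) : K.Connected := by
  classical
  refine ⟨fun x y => ?_⟩
  have := h (fun v => decide (K.Reachable x v)) ?_ x y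
  · simpa using this
  · intro s
    induction s using Sym2.ind with
    | _ a b =>
      intro hab
      rw [crs_mk]
      have hab' : K.Adj a b := hab
      simp only [ne_eq, not_not, decide_eq_decide]
      exact ⟨fun h => h.trans hab'.reachable, fun h => h.trans hab'.symm.reachable⟩

lemma count_bridges [Finite V] (K : SimpleGraph V) (F : Finset (Sym2 V))
    (hF : ∀ f ∈ F, f ∈ K.edgeSet ∧ Brd K.edgeSet f) :
    F.card + Nat.card K.ConnectedComponent ≤
      Nat.card (K.deleteEdges (F : Set (Sym2 V))).ConnectedComponent := by
  classical
  induction F using Finset.induction_on with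
  | empty => simp
  | insert f F hfF ih =>
    have ih' := ih (fun g hg => hF g (Finset.mem_insert_of_mem hg))
    obtain ⟨hfK, A, hA, hA'⟩ := hF f (Finset.mem_insert_self _ _)
    rw [Finset.card_insert_of_notMem hfF]
    set K1 := K.deleteEdges (F : Set (Sym2 V))
    set K2 := K.deleteEdges ((insert f F : Finset (Sym2 V)) : Set (Sym2 V)) with hK2
    have hle : K2 ≤ K1 := by
      apply SimpleGraph.deleteEdges_anti; simp
    have hlt : Nat.card K1.ConnectedComponent < Nat.card K2.ConnectedComponent := by
      let φ : K2.ConnectedComponent → K1.ConnectedComponent :=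
        ConnectedComponent.map (Hom.ofLE hle)
      have hsurj : Function.Surjective φ := by
        intro C
        induction C using ConnectedComponent.ind with
        | _ v => exact ⟨K2.connectedComponentMk v, rfl⟩
      refine lt_of_le_of_ne (Nat.card_le_card_of_surjective φ hsurj) ?_
      intro heq
      have hinj : Function.Injective φ := by
        have := (Nat.bijective_iff_surjective_and_card φ).2 ⟨hsurj, heq.symm⟩
        exact this.1
      induction f using Sym2.ind with
      | _ x y =>
        have hadj : K1.Adj x y := by
          simp only [K1, SimpleGraph.deleteEdges_adj]
          exact ⟨hfK, by simpa using hfF⟩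
        have h1 : φ (K2.connectedComponentMk x) = φ (K2.connectedComponentMk y) :=
          ConnectedComponent.sound hadj.reachable
        have h2 := ConnectedComponent.exact (hinj h1)
        have h3 : A x = A y := by
          refine reach_const (K := K2) ?_ h2
          intro s hs hsA
          rw [hK2, SimpleGraph.edgeSet_deleteEdges] at hs
          exact hs.2 (by simp [hA' s hs.1 hsA])
        rw [crs_mk] at hA
        exact hA h3
    omega

lemma count_cut [Finite V] (G : SimpleGraph V) (hconn : G.Connected)
    (h3ec : ∀ e ∈ G.edgeSet, ∀ f ∈ G.edgeSet, (G.deleteEdges {e, f}).Connected)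
    (S : Finset (Sym2 V)) 
    (h2 : 2 ≤ Nat.card (G.deleteEdges (S : Set (Sym2 V))).ConnectedComponent) :
    3 * Nat.card (G.deleteEdges (S : Set (Sym2 V))).ConnectedComponent ≤ 2 * S.card := by
  classical
  set H := G.deleteEdges (S : Set (Sym2 V)) with hH
  haveI := Fintype.ofFinite V
  haveI := Fintype.ofFinite H.ConnectedComponent
  rw [Nat.card_eq_fintype_card] at *
  let ind : H.ConnectedComponent → V → Bool := fun C v => decide (H.connectedComponentMk v = C)
  have key := Finset.card_nsmul_le_card_nsmul (s := (Finset.univ : Finset H.ConnectedComponent))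
    (t := S) (fun C s => Crs (ind C) s) (m := 3) (n := 2) ?_ ?_
  · simp only [smul_eq_mul, Finset.card_univ] at key; omega
  · intro C _
    have hcut : ∀ e ∈ G.edgeSet, ∀ f ∈ G.edgeSet,
        ∃ s ∈ G.edgeSet, s ≠ e ∧ s ≠ f ∧ Crs (ind C) s := by
      intro e he f hf
      by_contra hcon
      push Not at hcon
      have hc := h3ec e he f hf
      haveI : Nontrivial H.ConnectedComponent := Fintype.one_lt_card_iff_nontrivial.1 (by omega)
      obtain ⟨D, hD⟩ := exists_ne C
      induction C using ConnectedComponent.ind with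
      | _ x =>
        induction D using ConnectedComponent.ind with
        | _ y =>
          have := reach_const (A := ind (H.connectedComponentMk x)) ?_ (hc.preconnected x y)
          · simp [ind] at this
            exact hD (ConnectedComponent.sound this)
          · intro s hs
            rw [SimpleGraph.edgeSet_deleteEdges] at hs
            have h3 := hs.2
            simp at h3
            exact hcon s hs.1 h3.1 h3.2
    have hinS : ∀ s ∈ G.edgeSet, Crs (ind C) s → s ∈ S := by
      intro s hs hsC
      by_contra hsS
      induction s using Sym2.ind with
      | _ x y =>
        have hadj : H.Adj x y := by
          rw [hH, SimpleGraph.deleteEdges_adj]; exact ⟨hs, hsS⟩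
        rw [crs_mk] at hsC
        apply hsC
        simp only [ind]
        rw [ConnectedComponent.sound hadj.reachable]
    obtain ⟨e0, he0⟩ : ∃ e, e ∈ G.edgeSet := by
      by_contra hne
      push Not at hne
      haveI : Nontrivial H.ConnectedComponent := Fintype.one_lt_card_iff_nontrivial.1 (by omega)
      obtain ⟨D, hD⟩ := exists_ne C
      induction C using ConnectedComponent.ind with
      | _ x =>
        induction D using ConnectedComponent.ind with
        | _ y =>
          have := reach_const (A := ind (H.connectedComponentMk x)) (fun s hs => absurd hs (hne s))
            (hconn.preconnected x y)
          simp [ind] at this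
          exact hD (ConnectedComponent.sound this)
    obtain ⟨a, ha, -, -, haC⟩ := hcut e0 he0 e0 he0
    obtain ⟨b, hb, hba, -, hbC⟩ := hcut a ha a ha
    obtain ⟨d, hd, hda, hdb, hdC⟩ := hcut a ha b hb
    have : ({a, b, d} : Finset (Sym2 V)) ⊆
        Finset.bipartiteAbove (fun C s => Crs (ind C) s) S C := by
      intro s hs
      simp only [Finset.mem_insert, Finset.mem_singleton] at hs
      rw [Finset.mem_bipartiteAbove]
      rcases hs with rfl | rfl | rfl
      · exact ⟨hinS _ ha haC, haC⟩
      · exact ⟨hinS _ hb hbC, hbC⟩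
      · exact ⟨hinS _ hd hdC, hdC⟩
    have h4 := Finset.card_le_card this
    rw [Finset.card_eq_three.2 ⟨a, b, d, hba.symm, hda.symm, hdb.symm, rfl⟩] at h4
    exact_mod_cast h4
  · intro s _
    induction s using Sym2.ind with
    | _ x y =>
      have : Finset.bipartiteBelow (fun C s => Crs (ind C) s) Finset.univ s(x, y) ⊆
          {H.connectedComponentMk x, H.connectedComponentMk y} := by
        intro C hC
        rw [Finset.mem_bipartiteBelow, crs_mk] at hC
        simp only [Finset.mem_insert, Finset.mem_singleton]
        by_contra hcon
        push Not at hcon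
        apply hC.2
        simp [ind, hcon.1.symm, hcon.2.symm]
      exact_mod_cast (Finset.card_le_card this).trans Finset.card_le_two

lemma exists_col [Finite V] (G : SimpleGraph V) (hconn : G.Connected)
    (h3ec : ∀ e ∈ G.edgeSet, ∀ f ∈ G.edgeSet, (G.deleteEdges {e, f}).Connected) :
    ∃ c : Col V, Valid G.edgeSet c ∧ ∀ e ∈ G.edgeSet, c e ≠ none := by
  classical
  have hne : ∃ n, ∃ c : Col V, Valid G.edgeSet c ∧ (N G.edgeSet c).ncard = n :=
    ⟨_, fun _ => none, fun j A ⟨s, hs, hsA⟩ => ⟨s, hs, hsA, by simp⟩, rfl⟩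
  obtain ⟨c, hv, hcn⟩ := Nat.find_spec hne
  have hmin : ∀ c', Valid G.edgeSet c' → (N G.edgeSet c).ncard ≤ (N G.edgeSet c').ncard := by
    intro c' h'
    rw [hcn]
    exact Nat.find_min' hne ⟨c', h', rfl⟩
  refine ⟨c, hv, fun e he hce => ?_⟩
  obtain ⟨S', hSE, heS, hS⟩ := main_brd he hce hv hmin
  haveI := Fintype.ofFinite V
  obtain ⟨S, rfl⟩ : ∃ S : Finset (Sym2 V), (S : Set (Sym2 V)) = S' := ⟨S'.toFinset, by simp⟩
  have hcc := count_cut G hconn h3ec S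
  set H := G.deleteEdges (S : Set (Sym2 V)) with hH
  have hj : ∀ j : Fin 3, (S.filter (fun s => c s ≠ some j)).card + 1 ≤
      Nat.card H.ConnectedComponent := by
    intro j
    set K := G.deleteEdges {t | t ∈ S ∧ c t = some j} with hK
    have hKE : K.edgeSet = KK G.edgeSet S c j := by
      rw [hK, SimpleGraph.edgeSet_deleteEdges]
      ext t; simp [KK]
    have h1 := count_bridges K (S.filter (fun s => c s ≠ some j)) ?_
    · have h2 : K.deleteEdges ((S.filter (fun s => c s ≠ some j) : Finset _) : Set (Sym2 V)) = H := by
        rw [hK, SimpleGraph.deleteEdges_deleteEdges, hH]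
        congr 1
        ext t; simp; tauto
      rw [h2] at h1
      haveI := hconn.nonempty
      haveI : Nonempty K.ConnectedComponent := ⟨K.connectedComponentMk (Classical.arbitrary V)⟩
      have := Nat.card_pos (α := K.ConnectedComponent)
      omega
    · intro f hf
      rw [Finset.mem_filter] at hf
      rw [hKE]
      exact ⟨⟨hSE hf.1, fun h => hf.2 h.2⟩, hS f hf.1 j hf.2⟩
  have hsum : 2 * S.card + 1 ≤ ∑ j : Fin 3, (S.filter (fun s => c s ≠ some j)).card := by
    simp only [Finset.card_filter]
    rw [Finset.sum_comm]
    have h2 : 2 * S.card = ∑ s ∈ S, 2 := by simp [mul_comm]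
    rw [h2, Nat.add_one_le_iff]
    refine Finset.sum_lt_sum (fun s _ => ?_) ⟨e, heS, ?_⟩
    · rcases h : c s with _ | i
      · simp
      · fin_cases i <;> simp [Fin.sum_univ_three]
    · simp [hce]
  rw [Fin.sum_univ_three] at hsum
  have := hj 0
  have := hj 1
  have := hj 2
  by_cases h : 2 ≤ Nat.card H.ConnectedComponent
  · have := hcc h
    omega
  · omega

end Pack

/-- A finite, connected, 3-edge-connected simple graph admits three spanning
trees such that every edge belongs to at most two of them. -/
theorem stmt11 {V : Type*} [Finite V] (G : SimpleGraph V) (hconn : G.Connected)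
    (h3ec : ∀ e ∈ G.edgeSet, ∀ f ∈ G.edgeSet, (G.deleteEdges {e, f}).Connected) :
    ∃ T₁ T₂ T₃ : SimpleGraph V,
      (T₁ ≤ G ∧ T₁.Connected ∧ T₁.IsAcyclic) ∧
      (T₂ ≤ G ∧ T₂.Connected ∧ T₂.IsAcyclic) ∧
      (T₃ ≤ G ∧ T₃.Connected ∧ T₃.IsAcyclic) ∧
      (∀ e ∈ G.edgeSet, ¬ (e ∈ T₁.edgeSet ∧ e ∈ T₂.edgeSet ∧ e ∈ T₃.edgeSet)) := by
  obtain ⟨c, hv, hc⟩ := Pack.exists_col G hconn h3ec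
  haveI := hconn.nonempty
  have hT : ∀ j : Fin 3, ∃ T : SimpleGraph V, (T ≤ G ∧ T.Connected ∧ T.IsAcyclic) ∧
      ∀ e ∈ T.edgeSet, c e ≠ some j := by
    intro j
    have hcon : (G.deleteEdges {s | c s = some j}).Connected := by
      apply Pack.conn_of_cuts
      intro A hA x y
      refine Pack.reach_const (K := G) ?_ (hconn.preconnected x y)
      intro s hs hsA
      obtain ⟨t, ht, htA, htc⟩ := hv j A ⟨s, hs, hsA⟩
      refine hA t ?_ htA
      rw [SimpleGraph.edgeSet_deleteEdges]
      exact ⟨ht, htc⟩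
    obtain ⟨T, hT, hT'⟩ := hcon.exists_isTree_le
    refine ⟨T, ⟨hT.trans (SimpleGraph.deleteEdges_le _), hT'.1, hT'.2⟩, fun e he => ?_⟩
    have := SimpleGraph.edgeSet_mono hT he
    rw [SimpleGraph.edgeSet_deleteEdges] at this
    exact this.2
  obtain ⟨T₁, h1, h1'⟩ := hT 0
  obtain ⟨T₂, h2, h2'⟩ := hT 1
  obtain ⟨T₃, h3, h3'⟩ := hT 2
  refine ⟨T₁, T₂, T₃, h1, h2, h3, fun e he ⟨e1, e2, e3⟩ => ?_⟩
  have a1 := h1' e e1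
  have a2 := h2' e e2
  have a3 := h3' e e3
  rcases h : c e with _ | i
  · exact hc e he h
  · fin_cases i <;> simp_all
end
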